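/- arXiv:1407.5236 — 2 statements merged into one kernel-verified Lean document; each statement's English description precedes it below -/
import Mathlib

section
/- For every integer t ≥ 0 there exists an integer s ≥ 0 such that for every finite simple graph G, if K_{t+1} is not a minor of G, then V(G) can be partitioned into t pairwise disjoint (possibly empty) sets X_1, …, X_t whose union is V(G), such that for each i with 1 ≤ i ≤ t the subgraph of G induced on X_i has maximum degree at most s. -/
/-- `G` has a `K_n` minor: there are `n` nonempty, pairwise disjoint branch sets,
each inducing a connected subgraph, with an edge of `G` between any two of them. -/
def HasCompleteMinor {V : Type} (G : SimpleGraph V) (n : ℕ) : Prop :=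
  ∃ f : Fin n → Set V,
    (∀ i, (f i).Nonempty) ∧
    (∀ i, (G.induce (f i)).Connected) ∧
    (Pairwise fun i j => Disjoint (f i) (f j)) ∧
    (∀ i j, i ≠ j → ∃ x ∈ f i, ∃ y ∈ f j, G.Adj x y)

/-- Every vertex of `X` has at most `s` neighbours (w.r.t. `G`) inside `X`;
equivalently the subgraph of `G` induced on `X` has maximum degree at most `s`. -/
def MaxDegWithinLE {V : Type} (G : SimpleGraph V) (X : Set V) (s : ℕ) : Prop :=
  ∀ v ∈ X, ({u | u ∈ X ∧ G.Adj v u}).ncard ≤ s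

/-!
A graph with no `K_n` minor has at most `2 ^ n` edges per vertex (Mader). Let `G` have no `K_{t+1}`
minor, and suppose every vertex of a set `B` has at least `t` neighbours in a disjoint set `A`.
Contract the vertices of `B` into `A` one after the other, each time creating a new edge inside `A`.
This cannot get stuck, because a vertex whose neighbours in `A` already form a clique yields a
`K_{t+1}`. The density bound for the resulting minor on `A` gives `|B| ≤ 2 ^ (t + 1) * |A|`.

Take `A` to be the vertices of large degree and `B` the other non-isolated vertices. If all vertices
of `B` have degree at least `t` and no edge joins two of them, then `A` receives more edges than the
density bound allows. Hence there is either a non-isolated vertex of degree less than `t` or an edge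
between two vertices of bounded degree, and in both cases edges can be deleted and a colouring
of the remaining graph adapted.
-/

variable {V W : Type} {ι α : Type*} {G : SimpleGraph V} {n t : ℕ}

section Connectivity

lemma connected_induce_of_forall_adj {s : Set V} {a : V} (ha : a ∈ s)
    (hs : ∀ x ∈ s, x ≠ a → G.Adj a x) : (G.induce s).Connected := by
  refine SimpleGraph.connected_iff_exists_forall_reachable _ |>.2 ⟨⟨a, ha⟩, fun ⟨x, hx⟩ ↦ ?_⟩
  obtain rfl | hxa := eq_or_ne x a
  · exact .rfl
  · exact SimpleGraph.Adj.reachable (hs x hx hxa)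

lemma connected_induce_image {G' : SimpleGraph W} (φ : G →g G') {s : Set V}
    (hs : (G.induce s).Connected) : (G'.induce (φ '' s)).Connected := by
  refine hs.map (SimpleGraph.induceHom φ (Set.mapsTo_image φ s)) ?_
  rintro ⟨_, x, hx, rfl⟩
  exact ⟨⟨x, hx⟩, rfl⟩

lemma connected_induce_preimage {h : V → W} {s : Set W}
    (hfiber : ∀ w ∈ s, (G.induce (h ⁻¹' {w})).Connected)
    (hs : ((G.map h).induce s).Connected) : (G.induce (h ⁻¹' s)).Connected := by
  have reachable_of_eq (x y : h ⁻¹' s) (hxy : h x = h y) : (G.induce (h ⁻¹' s)).Reachable x y := by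
    have hsub : h ⁻¹' {h y} ⊆ h ⁻¹' s := Set.preimage_mono (Set.singleton_subset_iff.2 y.2)
    exact ((hfiber (h y) y.2).preconnected ⟨x, hxy⟩ ⟨y, rfl⟩).map
      (SimpleGraph.induceHomOfLE G hsub).toHom
  have reachable_of_walk {a b : s} (p : ((G.map h).induce s).Walk a b) :
      ∀ x y : h ⁻¹' s, h x = a → h y = b → (G.induce (h ⁻¹' s)).Reachable x y := by
    induction p with
    | nil => exact fun x y hx hy ↦ reachable_of_eq x y (hx.trans hy.symm)
    | @cons a c _ hac _ ih =>
      intro x y hx hy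
      obtain ⟨-, x', y', hadj, (hx' : h x' = a), (hy' : h y' = c)⟩ := hac
      have hx's : x' ∈ h ⁻¹' s := Set.mem_preimage.2 (hx'.symm ▸ a.2)
      have hy's : y' ∈ h ⁻¹' s := Set.mem_preimage.2 (hy'.symm ▸ c.2)
      have hstep : (G.induce (h ⁻¹' s)).Adj ⟨x', hx's⟩ ⟨y', hy's⟩ := hadj
      exact (reachable_of_eq x _ (hx.trans hx'.symm)).trans (hstep.reachable.trans (ih _ y hy' hy))
  obtain ⟨w, hw⟩ := hs.nonempty
  obtain ⟨x, hx⟩ := (hfiber w hw).nonempty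
  have : Nonempty (h ⁻¹' s) := ⟨x, Set.mem_preimage.2 (Set.mem_singleton_iff.1 hx ▸ hw)⟩
  exact ⟨fun x y ↦ reachable_of_walk (hs.preconnected ⟨h x, x.2⟩ ⟨h y, y.2⟩).some x y rfl rfl⟩

end Connectivity

section CompleteModel

/-- The sets `f i` are the branch sets of a complete minor of `G` with vertex set `ι`. Allowing an
arbitrary index type makes it easy to add a branch set or to index by the vertices of a clique. -/
structure IsCompleteModel (G : SimpleGraph V) (f : ι → Set V) : Prop where
  connected : ∀ i, (G.induce (f i)).Connected
  disjoint : Pairwise fun i j ↦ Disjoint (f i) (f j)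
  exists_adj : Pairwise fun i j ↦ ∃ x ∈ f i, ∃ y ∈ f j, G.Adj x y

namespace IsCompleteModel

variable {f : ι → Set V}

lemma nonempty (hf : IsCompleteModel G f) (i : ι) : (f i).Nonempty :=
  Set.nonempty_coe_sort.1 (hf.connected i).nonempty

lemma comp_equiv {κ : Type*} (hf : IsCompleteModel G f) (e : κ ≃ ι) :
    IsCompleteModel G (f ∘ e) where
  connected i := hf.connected (e i)
  disjoint _ _ hij := hf.disjoint (e.injective.ne hij)
  exists_adj _ _ hij := hf.exists_adj (e.injective.ne hij)

lemma hasCompleteMinor [Finite ι] (hf : IsCompleteModel G f) : HasCompleteMinor G (Nat.card ι) :=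
  have hf' := hf.comp_equiv (Finite.equivFin ι).symm
  ⟨_, hf'.nonempty, hf'.connected, hf'.disjoint, hf'.exists_adj⟩

lemma image {G' : SimpleGraph W} (hf : IsCompleteModel G f) (c : SimpleGraph.Copy G G') :
    IsCompleteModel G' fun i ↦ c '' f i where
  connected i := connected_induce_image c.toHom (hf.connected i)
  disjoint _ _ hij := (Set.disjoint_image_iff c.injective).2 (hf.disjoint hij)
  exists_adj i j hij := by
    obtain ⟨x, hx, y, hy, hxy⟩ := hf.exists_adj hij
    exact ⟨c x, Set.mem_image_of_mem c hx, c y, Set.mem_image_of_mem c hy, c.toHom.map_adj hxy⟩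

lemma preimage {h : V → W} {f : ι → Set W} (hf : IsCompleteModel (G.map h) f)
    (hfiber : ∀ i, ∀ w ∈ f i, (G.induce (h ⁻¹' {w})).Connected) :
    IsCompleteModel G fun i ↦ h ⁻¹' f i where
  connected i := connected_induce_preimage (hfiber i) (hf.connected i)
  disjoint _ _ hij := (hf.disjoint hij).preimage h
  exists_adj i j hij := by
    obtain ⟨_, hx, _, hy, -, x, y, hxy, rfl, rfl⟩ := hf.exists_adj hij
    exact ⟨x, hx, y, hy, hxy⟩

lemma option_elim {v : V} (hf : IsCompleteModel G f) (hv : ∀ i, v ∉ f i)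
    (hadj : ∀ i, ∃ x ∈ f i, G.Adj v x) :
    IsCompleteModel G fun o : Option ι ↦ o.elim {v} f where
  connected
    | none => connected_induce_of_forall_adj (Set.mem_singleton v) fun _ hx hne ↦ absurd hx hne
    | some i => hf.connected i
  disjoint
    | none, none, h => absurd rfl h
    | none, some i, _ => Set.disjoint_singleton_left.2 (hv i)
    | some i, none, _ => Set.disjoint_singleton_right.2 (hv i)
    | some _, some _, h => hf.disjoint fun e ↦ h (congrArg some e)
  exists_adj
    | none, none, h => absurd rfl h
    | none, some i, _ => ⟨v, rfl, hadj i⟩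
    | some i, none, _ => let ⟨x, hx, hvx⟩ := hadj i; ⟨x, hx, v, rfl, hvx.symm⟩
    | some _, some _, h => hf.exists_adj fun e ↦ h (congrArg some e)

end IsCompleteModel

lemma isCompleteModel_singleton {s : Set V} (hs : G.IsClique s) :
    IsCompleteModel G fun x : s ↦ {(x : V)} where
  connected _ := connected_induce_of_forall_adj rfl fun _ hx hne ↦ absurd hx hne
  disjoint _ _ hxy := Set.disjoint_singleton.2 (Subtype.coe_ne_coe.2 hxy)
  exists_adj x y hxy := ⟨x, rfl, y, rfl, hs x.2 y.2 (Subtype.coe_ne_coe.2 hxy)⟩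

lemma HasCompleteMinor.exists_isCompleteModel (hG : HasCompleteMinor G n) :
    ∃ f : Fin n → Set V, IsCompleteModel G f :=
  let ⟨f, _, hconn, hdisj, hadj⟩ := hG
  ⟨f, hconn, hdisj, fun i j ↦ hadj i j⟩

lemma HasCompleteMinor.of_isContained {G' : SimpleGraph W} (hG : HasCompleteMinor G n)
    (h : G.IsContained G') : HasCompleteMinor G' n := by
  obtain ⟨f, hf⟩ := hG.exists_isCompleteModel
  simpa using (hf.image h.some).hasCompleteMinor

lemma hasCompleteMinor_zero (G : SimpleGraph V) : HasCompleteMinor G 0 := by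
  simp [HasCompleteMinor]

lemma HasCompleteMinor.succ_of_induce_neighborSet {v : V}
    (h : HasCompleteMinor (G.induce (G.neighborSet v)) n) : HasCompleteMinor G (n + 1) := by
  obtain ⟨f, hf⟩ := h.exists_isCompleteModel
  have hmodel := (hf.image (SimpleGraph.Copy.induce G _)).option_elim (v := v) ?_ ?_
  · simpa using hmodel.hasCompleteMinor
  · rintro i ⟨x, -, hx⟩
    exact x.2.ne hx.symm
  · intro i
    obtain ⟨x, hx⟩ := hf.nonempty i
    exact ⟨x, Set.mem_image_of_mem _ hx, x.2⟩

lemma hasCompleteMinor_one [Nonempty V] (G : SimpleGraph V) : HasCompleteMinor G 1 :=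
  HasCompleteMinor.succ_of_induce_neighborSet (v := Classical.arbitrary V) (hasCompleteMinor_zero _)

end CompleteModel

section StarContraction

/-- `h` moves every vertex of `B` to a neighbour and fixes all other vertices, so that its fibre
over a vertex outside `B` is a star. For `s` disjoint from `B`, the minor of `G` obtained by
contracting the stars centred in `s` is `(G.map h).induce s`. -/
structure IsStarContraction (G : SimpleGraph V) (B : Set V) (h : V → V) : Prop where
  adj : ∀ x ∈ B, G.Adj (h x) x
  eq_self : ∀ x ∉ B, h x = x

variable {B s : Set V} {h : V → V}

lemma isStarContraction_empty (G : SimpleGraph V) : IsStarContraction G ∅ id where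
  adj _ hx := hx.elim
  eq_self _ _ := rfl

lemma IsStarContraction.update [DecidableEq V] {a b : V} (hh : IsStarContraction G B h)
    (hab : G.Adj a b) : IsStarContraction G (insert b B) (Function.update h b a) where
  adj x hx := by
    obtain rfl | hxb := eq_or_ne x b
    · simpa using hab
    · simpa [hxb] using hh.adj x (hx.resolve_left hxb)
  eq_self x hx := by
    rw [Set.mem_insert_iff, not_or] at hx
    rw [Function.update_of_ne hx.1, hh.eq_self x hx.2]

lemma IsStarContraction.connected_fiber (hh : IsStarContraction G B h) {a : V} (ha : a ∉ B) :
    (G.induce (h ⁻¹' {a})).Connected := by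
  refine connected_induce_of_forall_adj (a := a) (hh.eq_self a ha) ?_
  rintro x rfl hxa
  exact hh.adj x (by_contra fun hx ↦ hxa (hh.eq_self x hx).symm)

lemma IsStarContraction.hasCompleteMinor_of_induce_map (hh : IsStarContraction G B h)
    (hs : Disjoint s B) (hminor : HasCompleteMinor ((G.map h).induce s) n) :
    HasCompleteMinor G n := by
  obtain ⟨f, hf⟩ := hminor.exists_isCompleteModel
  have hmodel := (hf.image (SimpleGraph.Copy.induce _ s)).preimage (G := G) (h := h) ?_
  · simpa using hmodel.hasCompleteMinor
  · rintro i _ ⟨x, -, rfl⟩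
    exact hh.connected_fiber (Set.disjoint_left.1 hs x.2)

lemma IsStarContraction.hasCompleteMinor_of_isClique_map [Finite s] (hh : IsStarContraction G B h)
    (hs : Disjoint s B) (hclique : (G.map h).IsClique s) : HasCompleteMinor G s.ncard := by
  refine ((isCompleteModel_singleton hclique).preimage ?_).hasCompleteMinor
  rintro x _ rfl
  exact hh.connected_fiber (Set.disjoint_left.1 hs x.2)

end StarContraction

section EdgeCounting

lemma ncard_edgeSet_induce_of_support_subset {s : Set V} (hs : G.support ⊆ s) :
    (G.induce s).edgeSet.ncard = G.edgeSet.ncard := by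
  rw [← (G.spanningCoe_induce_eq_self s).2 hs, SimpleGraph.edgeSet_map,
    Set.ncard_image_of_injective _ (Function.Embedding.injective _),
    SimpleGraph.induce_spanningCoe]

variable [Finite V]

lemma mul_ncard_le_two_mul_ncard_edgeSet {s : Set V} {d : ℕ}
    (hs : ∀ v ∈ s, d ≤ (G.neighborSet v).ncard) : d * s.ncard ≤ 2 * G.edgeSet.ncard := by
  classical
  have := Fintype.ofFinite V
  calc d * s.ncard = ∑ _v ∈ s.toFinset, d := by simp [Set.ncard_eq_toFinset_card', mul_comm]
    _ ≤ ∑ v ∈ s.toFinset, G.degree v := Finset.sum_le_sum fun v hv ↦ by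
      simpa only [← Nat.card_coe_set_eq, Nat.card_eq_fintype_card, G.card_neighborSet_eq_degree]
        using hs v (Set.mem_toFinset.1 hv)
    _ ≤ ∑ v, G.degree v := Finset.sum_le_sum_of_subset (Finset.subset_univ _)
    _ = 2 * G.edgeSet.ncard := by
      rw [G.sum_degrees_eq_twice_card_edges, Set.ncard_eq_toFinset_card', SimpleGraph.edgeFinset]

lemma mul_ncard_neighborSet_le_of_le_ncard_commonNeighbors {v : V} {d : ℕ}
    (hd : ∀ x, G.Adj v x → d ≤ (G.commonNeighbors v x).ncard) :
    d * (G.neighborSet v).ncard ≤ 2 * (G.induce (G.neighborSet v)).edgeSet.ncard := by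
  rw [← Nat.card_coe_set_eq, ← Set.ncard_univ]
  refine mul_ncard_le_two_mul_ncard_edgeSet fun x _ ↦ (hd x x.2).trans_eq ?_
  rw [← Set.ncard_image_of_injective _ Subtype.val_injective]
  congr 1
  ext y
  simp [SimpleGraph.mem_commonNeighbors, and_comm]

/-- An edge of the graph obtained by contracting `uv` into `u` comes from an edge `e` of `G` in one
of two ways: unchanged, or with the end `v` replaced by `u`. The latter only loses `uv` itself and
the edges from `v` to common neighbours. -/
lemma ncard_edgeSet_le_of_contract [DecidableEq V] {u v : V} (huv : G.Adj u v) :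
    G.edgeSet.ncard ≤ ((G.map (Function.update id v u)).induce {v}ᶜ).edgeSet.ncard
      + (G.commonNeighbors u v).ncard + 1 := by
  classical
  set H := G.map (Function.update id v u) with hH
  let lift (e : Sym2 V) : Sym2 V := if e ∈ G.edgeSet then e else e.map (Function.update id u v)
  have hsupp : H.support ⊆ {v}ᶜ := by
    rintro _ ⟨_, -, x, _, _, rfl, _⟩
    obtain rfl | hx := eq_or_ne x v
    · simp [huv.ne]
    · simp [hx]
  have mem_of_adj_v (x : V) (hx : G.Adj v x) : s(v, x) ∈
      insert s(u, v) (lift '' H.edgeSet ∪ (s(v, ·)) '' G.commonNeighbors u v) := by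
    obtain rfl | hxu := eq_or_ne x u
    · exact Or.inl Sym2.eq_swap
    by_cases hux : G.Adj u x
    · exact Or.inr (Or.inr ⟨x, ⟨hux, hx⟩, rfl⟩)
    · refine Or.inr (Or.inl ⟨s(u, x), ⟨hxu.symm, v, x, hx, ?_, ?_⟩, ?_⟩)
      · simp
      · simp [hx.ne']
      · simp [lift, hux, hxu]
  have hcover : G.edgeSet ⊆
      insert s(u, v) (lift '' H.edgeSet ∪ (s(v, ·)) '' G.commonNeighbors u v) := by
    rintro ⟨x, y⟩ hxy
    change G.Adj x y at hxy
    obtain rfl | hxv := eq_or_ne x v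
    · exact mem_of_adj_v y hxy
    obtain rfl | hyv := eq_or_ne y v
    · simpa only [Sym2.eq_swap] using mem_of_adj_v x hxy.symm
    refine Or.inr (Or.inl ⟨s(x, y), ⟨hxy.ne, x, y, hxy, ?_, ?_⟩, if_pos hxy⟩)
    · simp [hxv]
    · simp [hyv]
  calc G.edgeSet.ncard
      ≤ (lift '' H.edgeSet ∪ (s(v, ·)) '' G.commonNeighbors u v).ncard + 1 :=
        (Set.ncard_le_ncard hcover).trans (Set.ncard_insert_le _ _)
    _ ≤ H.edgeSet.ncard + (G.commonNeighbors u v).ncard + 1 := by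
        gcongr
        exact (Set.ncard_union_le _ _).trans
          (add_le_add (Set.ncard_image_le) (Set.ncard_image_le))
    _ = _ := by rw [ncard_edgeSet_induce_of_support_subset hsupp]

end EdgeCounting

section Density

lemma exists_adj_ncard_commonNeighbors_lt_or_hasCompleteMinor [Finite V] {d : ℕ}
    (hn : ∀ (U : Type) [Finite U] [Nonempty U] (H : SimpleGraph U),
      d * Nat.card U ≤ 2 * H.edgeSet.ncard → HasCompleteMinor H n)
    (hG : G ≠ ⊥) :
    (∃ u v, G.Adj u v ∧ (G.commonNeighbors u v).ncard < d) ∨ HasCompleteMinor G (n + 1) := by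
  refine or_iff_not_imp_left.2 fun hcommon ↦ ?_
  push Not at hcommon
  obtain ⟨v, w, hvw⟩ := SimpleGraph.ne_bot_iff_exists_adj.1 hG
  have : Nonempty (G.neighborSet v) := ⟨w, hvw⟩
  refine (hn _ (G.induce (G.neighborSet v)) ?_).succ_of_induce_neighborSet
  exact mul_ncard_neighborSet_le_of_le_ncard_commonNeighbors (hcommon v)

/-- Mader's argument: contract an edge with few common neighbours, or else find a dense graph in the
neighbourhood of a vertex. -/
theorem hasCompleteMinor_of_two_pow_mul_card_le [Finite V] [Nonempty V]
    (hG : 2 ^ n * Nat.card V ≤ G.edgeSet.ncard) : HasCompleteMinor G n := by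
  classical
  induction n generalizing V with
  | zero => exact hasCompleteMinor_zero G
  | succ n ihn =>
    induction hV : Nat.card V using Nat.strong_induction_on generalizing V with
    | _ m ihm =>
    have hbot : G ≠ ⊥ := by
      rintro rfl
      simp [Nat.card_pos.ne'] at hG
    obtain ⟨u, v, huv, hcommon⟩ | hminor :=
      exists_adj_ncard_commonNeighbors_lt_or_hasCompleteMinor (n := n) (d := 2 ^ (n + 1))
        (fun U _ _ H hH ↦ ihn (by rw [pow_succ] at hH; linarith)) hbot
    · have hcard : Nat.card ({v}ᶜ : Set V) + 1 = Nat.card V := by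
        rw [Nat.card_coe_set_eq, ← Set.ncard_singleton v, add_comm, Set.ncard_add_ncard_compl]
      have : Nonempty ({v}ᶜ : Set V) := ⟨u, huv.ne⟩
      refine IsStarContraction.hasCompleteMinor_of_induce_map
        ((isStarContraction_empty G).update huv) (s := {v}ᶜ) (by simp) ?_
      refine ihm _ (by lia) ?_ rfl
      have hcount := ncard_edgeSet_le_of_contract huv
      rw [← hcard, mul_add] at hG
      lia
    · exact hminor

lemma ncard_edgeSet_le_of_not_hasCompleteMinor [Finite V] (hG : ¬ HasCompleteMinor G n) :
    G.edgeSet.ncard ≤ 2 ^ n * Nat.card V := by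
  cases isEmpty_or_nonempty V
  · simp [Set.eq_empty_of_isEmpty]
  · exact (not_le.1 (mt hasCompleteMinor_of_two_pow_mul_card_le hG)).le

lemma ncard_edgeSet_le_mul_ncard_of_support_subset [Finite V] (hG : ¬ HasCompleteMinor G n)
    {s : Set V} (hs : G.support ⊆ s) : G.edgeSet.ncard ≤ 2 ^ n * s.ncard := by
  rw [← ncard_edgeSet_induce_of_support_subset hs]
  refine ncard_edgeSet_le_of_not_hasCompleteMinor (mt (HasCompleteMinor.of_isContained · ?_) hG)
  exact (SimpleGraph.Copy.induce G s).isContained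

end Density

section BipartiteDensity

variable {A B : Set V} {h : V → V} {b : V}

lemma IsStarContraction.induce_map_lt_induce_map_update [DecidableEq V] {a a' : V}
    (hh : IsStarContraction G B h) (hAB : Disjoint A B) (hbA : b ∉ A) (hbB : b ∉ B)
    (ha : a ∈ A) (ha' : a' ∈ A) (hba' : G.Adj b a') (hne : a ≠ a') (hnadj : ¬ (G.map h).Adj a a') :
    (G.map h).induce A < (G.map (Function.update h b a)).induce A := by
  have ne_b_of_mem {x : V} (hx : h x ∈ A) : x ≠ b := by
    rintro rfl
    exact hbA (hh.eq_self x hbB ▸ hx)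
  refine lt_of_le_not_ge ?_ fun hge ↦ hnadj (hge (v := ⟨a, ha⟩) (w := ⟨a', ha'⟩) ?_)
  · rintro ⟨_, hxA⟩ ⟨_, hyA⟩ ⟨hxy, x, y, hadj, rfl, rfl⟩
    exact ⟨hxy, x, y, hadj, Function.update_of_ne (ne_b_of_mem hxA) _ _,
      Function.update_of_ne (ne_b_of_mem hyA) _ _⟩
  · refine ⟨hne, b, a', hba', Function.update_self _ _ _, ?_⟩
    exact (Function.update_of_ne hba'.ne' _ _).trans (hh.eq_self a' (Set.disjoint_left.1 hAB ha'))

variable [Finite V]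

lemma IsStarContraction.exists_not_adj_map (hh : IsStarContraction G B h)
    (hG : ¬ HasCompleteMinor G (t + 1)) (hAB : Disjoint A B) (hbA : b ∉ A) (hbB : b ∉ B)
    (hb : t ≤ (G.neighborSet b ∩ A).ncard) :
    ∃ a ∈ A, ∃ a' ∈ A, G.Adj a b ∧ G.Adj b a' ∧ a ≠ a' ∧ ¬ (G.map h).Adj a a' := by
  by_contra! hadj
  obtain ⟨T, hT, hTcard⟩ := Set.exists_subset_card_eq hb
  have hbT : b ∉ T := fun hbT ↦ hbA (hT hbT).2
  refine hG ?_
  rw [← hTcard, ← Set.ncard_insert_of_notMem hbT]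
  refine hh.hasCompleteMinor_of_isClique_map ?_ ?_
  · exact Set.disjoint_insert_left.2 ⟨hbB, hAB.mono_left fun x hx ↦ (hT hx).2⟩
  · refine SimpleGraph.isClique_insert_of_notMem hbT |>.2 ⟨fun a ha a' ha' hne ↦ ?_, fun a ha ↦ ?_⟩
    · exact hadj a (hT ha).2 a' (hT ha').2 (hT ha).1.symm (hT ha').1 hne
    · exact ⟨(hT ha).1.ne, b, a, (hT ha).1, hh.eq_self b hbB,
        hh.eq_self a (Set.disjoint_left.1 hAB (hT ha).2)⟩

lemma exists_isStarContraction_ncard_le (hG : ¬ HasCompleteMinor G (t + 1)) (hAB : Disjoint A B)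
    (hB : ∀ b ∈ B, t ≤ (G.neighborSet b ∩ A).ncard) :
    ∃ h, IsStarContraction G B h ∧ B.ncard ≤ ((G.map h).induce A).edgeSet.ncard := by
  classical
  induction B, B.toFinite using Set.Finite.induction_on with
  | empty => exact ⟨id, isStarContraction_empty G, by simp⟩
  | @insert b B hbB _ ih =>
    rw [Set.disjoint_insert_right] at hAB
    rw [Set.forall_mem_insert] at hB
    obtain ⟨h, hh, hcard⟩ := ih hAB.2 hB.2
    obtain ⟨a, ha, a', ha', hab, hba', hne, hnadj⟩ :=
      hh.exists_not_adj_map hG hAB.2 hAB.1 hbB hB.1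
    refine ⟨Function.update h b a, hh.update hab, ?_⟩
    calc (insert b B).ncard ≤ B.ncard + 1 := Set.ncard_insert_le _ _
      _ ≤ ((G.map h).induce A).edgeSet.ncard + 1 := by gcongr
      _ ≤ _ := Set.ncard_lt_ncard <| SimpleGraph.edgeSet_strict_mono <|
        hh.induce_map_lt_induce_map_update hAB.2 hAB.1 hbB ha ha' hba' hne hnadj

lemma ncard_le_of_forall_le_ncard_neighborSet_inter (hG : ¬ HasCompleteMinor G (t + 1))
    (hAB : Disjoint A B) (hB : ∀ b ∈ B, t ≤ (G.neighborSet b ∩ A).ncard) :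
    B.ncard ≤ 2 ^ (t + 1) * A.ncard := by
  obtain ⟨h, hh, hcard⟩ := exists_isStarContraction_ncard_le hG hAB hB
  exact hcard.trans <| ncard_edgeSet_le_of_not_hasCompleteMinor <|
    mt (hh.hasCompleteMinor_of_induce_map hAB) hG

end BipartiteDensity

section LightEdge

/-- The defect allowed in a colouring of a graph without a `K_{t+1}` minor with `t` colours. -/
def defectBound (t : ℕ) : ℕ := 2 * (2 ^ (t + 1) * (2 ^ (t + 1) + 1))

theorem exists_adj_ncard_neighborSet_le_defectBound [Finite V]
    (hG : ¬ HasCompleteMinor G (t + 1)) (hbot : G ≠ ⊥)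
    (hdeg : ∀ v ∈ G.support, t ≤ (G.neighborSet v).ncard) :
    ∃ x y, G.Adj x y ∧
      (G.neighborSet x).ncard ≤ defectBound t ∧ (G.neighborSet y).ncard ≤ defectBound t := by
  by_contra! hheavy
  let A : Set V := {v | defectBound t < (G.neighborSet v).ncard}
  let B : Set V := G.support \ A
  have hBA : B.ncard ≤ 2 ^ (t + 1) * A.ncard := by
    refine ncard_le_of_forall_le_ncard_neighborSet_inter hG Set.disjoint_sdiff_right fun b hb ↦ ?_
    have hsub : G.neighborSet b ⊆ A := fun x hbx ↦ hheavy b x hbx (not_lt.1 hb.2)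
    rw [Set.inter_eq_left.2 hsub]
    exact hdeg b hb.1
  have hedges : (defectBound t + 1) * A.ncard ≤ defectBound t * A.ncard := calc
    (defectBound t + 1) * A.ncard ≤ 2 * G.edgeSet.ncard :=
      mul_ncard_le_two_mul_ncard_edgeSet fun v hv ↦ hv
    _ ≤ 2 * (2 ^ (t + 1) * (B ∪ A).ncard) := by
      gcongr
      exact ncard_edgeSet_le_mul_ncard_of_support_subset hG (Set.subset_sdiff_union _ _)
    _ ≤ 2 * (2 ^ (t + 1) * (2 ^ (t + 1) * A.ncard + A.ncard)) := by
      gcongr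
      exact (Set.ncard_union_le _ _).trans (by gcongr)
    _ = defectBound t * A.ncard := by rw [defectBound]; ring
  have hA : A = ∅ := (Set.ncard_eq_zero).1 (by lia)
  obtain ⟨x, y, hxy⟩ := SimpleGraph.ne_bot_iff_exists_adj.1 hbot
  have hx : (G.neighborSet x).ncard ≤ defectBound t := not_lt.1 fun hx ↦ hA.subset hx
  exact hA.subset (hheavy x y hxy hx)

end LightEdge

section DefectiveColoring

/-- A colouring of the vertices each of whose colour classes induces a subgraph of maximum degree
at most `s`. -/
def IsDefectiveColoring (G : SimpleGraph V) (s : ℕ) (k : V → α) : Prop :=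
  ∀ i, MaxDegWithinLE G (k ⁻¹' {i}) s

variable {s : ℕ} {k : V → α}

lemma isDefectiveColoring_iff :
    IsDefectiveColoring G s k ↔ ∀ v, {u | k u = k v ∧ G.Adj v u}.ncard ≤ s := by
  simp only [IsDefectiveColoring, MaxDegWithinLE, Set.mem_preimage, Set.mem_singleton_iff]
  exact ⟨fun h v ↦ h _ v rfl, fun h _ v hv ↦ hv ▸ h v⟩

lemma isDefectiveColoring_bot (k : V → α) : IsDefectiveColoring ⊥ s k := by
  simp [isDefectiveColoring_iff]

lemma nonempty_fun_fin_of_not_hasCompleteMinor (hG : ¬ HasCompleteMinor G (t + 1)) :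
    Nonempty (V → Fin t) := by
  cases t with
  | zero =>
    have : IsEmpty V := not_nonempty_iff.1 fun _ ↦ hG (hasCompleteMinor_one G)
    infer_instance
  | succ t => infer_instance

variable [Finite V]

lemma IsDefectiveColoring.of_forall_ncard_neighborSet_le_or {G' : SimpleGraph V} {k' : V → α}
    (hk' : IsDefectiveColoring G' s k')
    (h : ∀ v, (G.neighborSet v).ncard ≤ s ∨
      ∀ u, k u = k v → G.Adj v u → k' u = k' v ∧ G'.Adj v u) :
    IsDefectiveColoring G s k := by
  rw [isDefectiveColoring_iff] at hk' ⊢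
  intro v
  obtain hv | hv := h v
  · exact (Set.ncard_le_ncard fun u hu ↦ hu.2).trans hv
  · exact (Set.ncard_le_ncard fun u hu ↦ hv u hu.1 hu.2).trans (hk' v)

lemma IsDefectiveColoring.of_deleteEdges_singleton {x y : V}
    (hk : IsDefectiveColoring (G.deleteEdges {s(x, y)}) s k)
    (hx : (G.neighborSet x).ncard ≤ s) (hy : (G.neighborSet y).ncard ≤ s) :
    IsDefectiveColoring G s k := by
  refine hk.of_forall_ncard_neighborSet_le_or fun v ↦ ?_
  obtain rfl | hvx := eq_or_ne v x
  · exact .inl hx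
  obtain rfl | hvy := eq_or_ne v y
  · exact .inl hy
  exact .inr fun u huv hvu ↦ ⟨huv, by simp [hvu, hvx, hvy]⟩

lemma IsDefectiveColoring.update [DecidableEq V] {x : V} {i : α}
    (hk : IsDefectiveColoring (G.deleteIncidenceSet x) s k) (hi : ∀ u, G.Adj x u → k u ≠ i) :
    IsDefectiveColoring G s (Function.update k x i) := by
  refine hk.of_forall_ncard_neighborSet_le_or fun v ↦ .inr fun u huv hvu ↦ ?_
  obtain rfl | hvx := eq_or_ne v x
  · rw [Function.update_self, Function.update_of_ne hvu.ne'] at huv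
    exact absurd huv (hi u hvu)
  obtain rfl | hux := eq_or_ne u x
  · rw [Function.update_self, Function.update_of_ne hvx] at huv
    exact absurd huv.symm (hi v hvu.symm)
  rw [Function.update_of_ne hvx, Function.update_of_ne hux] at huv
  exact ⟨huv, SimpleGraph.deleteIncidenceSet_adj.2 ⟨hvu, hvx, hux⟩⟩

lemma exists_forall_adj_ne {x : V} (k : V → α)
    (hx : (G.neighborSet x).ncard < Nat.card α) : ∃ i, ∀ u, G.Adj x u → k u ≠ i := by
  by_contra! hall
  have hsurj : k '' G.neighborSet x = Set.univ := Set.eq_univ_of_forall hall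
  have := Set.ncard_image_le (f := k) (s := G.neighborSet x)
  rw [hsurj, Set.ncard_univ] at this
  exact hx.not_ge this

theorem exists_isDefectiveColoring [Nonempty (V → Fin t)] (hG : ¬ HasCompleteMinor G (t + 1)) :
    ∃ k : V → Fin t, IsDefectiveColoring G (defectBound t) k := by
  classical
  induction G using WellFoundedLT.induction with
  | ind G ih =>
  have ih_of_lt {G' : SimpleGraph V} (hlt : G' < G) := ih G' hlt
    (mt (HasCompleteMinor.of_isContained · (.of_le hlt.le)) hG)
  obtain rfl | hbot := eq_or_ne G ⊥
  · exact ⟨Classical.arbitrary _, isDefectiveColoring_bot _⟩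
  by_cases hdeg : ∀ v ∈ G.support, t ≤ (G.neighborSet v).ncard
  · obtain ⟨x, y, hxy, hx, hy⟩ := exists_adj_ncard_neighborSet_le_defectBound hG hbot hdeg
    have hlt : G.deleteEdges {s(x, y)} < G :=
      (G.deleteEdges_le _).lt_of_not_ge fun hle ↦ by simpa using hle hxy
    obtain ⟨k, hk⟩ := ih_of_lt hlt
    exact ⟨k, hk.of_deleteEdges_singleton hx hy⟩
  · push Not at hdeg
    obtain ⟨x, ⟨y, hxy⟩, hx⟩ := hdeg
    have hlt : G.deleteIncidenceSet x < G :=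
      (G.deleteIncidenceSet_le x).lt_of_not_ge fun hle ↦ by
        simpa [SimpleGraph.deleteIncidenceSet_adj] using hle hxy
    obtain ⟨k, hk⟩ := ih_of_lt hlt
    obtain ⟨i, hi⟩ := exists_forall_adj_ne k (hx.trans_eq (Nat.card_fin t).symm)
    exact ⟨_, hk.update hi⟩

end DefectiveColoring

/-- For every integer `t ≥ 0` there is an integer `s ≥ 0` such that every finite
graph `G` with no `K_{t+1}` minor admits a partition of its vertex set into `t`
pairwise disjoint sets, each inducing a subgraph of maximum degree at most `s`. -/
theorem hadwiger_defective (t : ℕ) :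
    ∃ s : ℕ, ∀ (V : Type) [Fintype V] (G : SimpleGraph V),
      ¬ HasCompleteMinor G (t + 1) →
      ∃ X : Fin t → Set V,
        (Pairwise fun i j => Disjoint (X i) (X j)) ∧
        (⋃ i, X i) = Set.univ ∧
        ∀ i, MaxDegWithinLE G (X i) s := by
  refine ⟨defectBound t, fun V _ G hG ↦ ?_⟩
  have := nonempty_fun_fin_of_not_hasCompleteMinor hG
  obtain ⟨k, hk⟩ := exists_isDefectiveColoring hG
  refine ⟨fun i ↦ k ⁻¹' {i}, fun i j hij ↦ ?_, ?_, hk⟩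
  · exact (Set.disjoint_singleton.2 hij).preimage k
  · rw [← Set.preimage_iUnion, Set.iUnion_of_singleton, Set.preimage_univ]
end

section
/- Let t ≥ 0 be an integer and let r be a real number with r > t/2, such that every finite simple graph H with no K_{t+1} minor satisfies |E(H)| ≤ r·|V(H)|. Let s be the least integer greater than r(2r − t + 2). Then for every finite simple graph G, if K_{t+1} is not a minor of G, then V(G) can be partitioned into t sets X_1, …, X_t such that for each i with 1 ≤ i ≤ t the subgraph of G induced on X_i has maximum degree strictly less than s. -/
/-!
Write `d = r(2r − t + 2)`. A vertex of degree at most `d` is never a problem for a colouring of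
defect `d`, so edges joining two such vertices may be deleted. If some vertex now has degree less
than `t`, colour the rest inductively and give that vertex a colour not used by its neighbours.

Otherwise let `B` be the set of vertices of degree greater than `d`; its complement `A` is stable,
so each `a ∈ A` has at least `t` neighbours in `B`. Contract the vertices of `A` into `B` one by
one: as there is no `K_{t+1}` minor, two neighbours of `a` are not yet adjacent, and contracting
the edge from `a` to one of them joins them by a new edge. The resulting minor on `B` has at least
`|A|` edges, whence `|A| ≤ r|B|`. On the other hand, summing degrees gives
`d|B| + t|A| < 2|E(G)| ≤ 2r(|A| + |B|)`, that is, `(2r − t)(|A| − r|B|) > 0`, a contradiction.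
-/

open SimpleGraph

universe u v w

variable {U : Type u} {W : Type w} {V : Type v} {F : SimpleGraph U} {H : SimpleGraph W}
  {G : SimpleGraph V}

/-- `φ` is a model of `H` as a minor of `G`: the branch sets `φ w` are pairwise disjoint and induce
connected subgraphs, and adjacent vertices of `H` have adjacent branch sets. Connected graphs are
nonempty in Mathlib, so branch sets are nonempty. -/
structure IsMinorModel (H : SimpleGraph W) (G : SimpleGraph V) (φ : W → Set V) : Prop where
  connected : ∀ w, (G.induce (φ w)).Connected
  disjoint : Pairwise fun w w' => Disjoint (φ w) (φ w')
  adj : ∀ ⦃w w'⦄, H.Adj w w' → ∃ x ∈ φ w, ∃ y ∈ φ w', G.Adj x y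

/-- The minor relation between graphs, witnessed by a family of branch sets. -/
def IsMinor (H : SimpleGraph W) (G : SimpleGraph V) : Prop :=
  ∃ φ : W → Set V, IsMinorModel H G φ

theorem hasCompleteMinor_iff_isMinor {V : Type} {G : SimpleGraph V} {n : ℕ} :
    HasCompleteMinor G n ↔ IsMinor (completeGraph (Fin n)) G :=
  ⟨fun ⟨f, _, hconn, hdisj, hadj⟩ => ⟨f, hconn, hdisj, fun i j hij => hadj i j hij⟩,
    fun ⟨f, hf⟩ => ⟨f, fun i => Set.nonempty_coe_sort.1 (hf.connected i).nonempty, hf.connected,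
      hf.disjoint, fun _ _ hij => hf.adj hij⟩⟩

theorem connected_induce_singleton (G : SimpleGraph V) (v : V) : (G.induce {v}).Connected :=
  .of_subsingleton

namespace IsMinorModel

variable {φ : W → Set V}

theorem reachable_biUnion (hφ : IsMinorModel H G φ) {S : Set W} {w w' : S}
    (h : (H.induce S).Reachable w w') {x y : V} (hx : x ∈ φ w) (hy : y ∈ φ w') :
    (G.induce (⋃ z ∈ S, φ z)).Reachable
      ⟨x, Set.mem_biUnion w.2 hx⟩ ⟨y, Set.mem_biUnion w'.2 hy⟩ := by
  have within (w : S) {x y : V} (hx : x ∈ φ w) (hy : y ∈ φ w) :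
      (G.induce (⋃ z ∈ S, φ z)).Reachable
        ⟨x, Set.mem_biUnion w.2 hx⟩ ⟨y, Set.mem_biUnion w.2 hy⟩ :=
    ((hφ.connected w).preconnected ⟨x, hx⟩ ⟨y, hy⟩).map
      (G.induceHomOfLE (Set.subset_biUnion_of_mem w.2)).toHom
  obtain ⟨p⟩ := h
  induction p generalizing x with
  | nil => exact within _ hx hy
  | cons hadj _ ih =>
    obtain ⟨a, ha, b, hb, hab⟩ := hφ.adj hadj
    exact (within _ hx ha).trans (.trans (Adj.reachable (induce_adj.2 hab)) (ih hb hy))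

theorem connected_biUnion (hφ : IsMinorModel H G φ) {S : Set W} (hS : (H.induce S).Connected) :
    (G.induce (⋃ w ∈ S, φ w)).Connected := by
  have : Nonempty ↥(⋃ w ∈ S, φ w) := by
    obtain ⟨w⟩ := hS.nonempty
    obtain ⟨x⟩ := (hφ.connected w).nonempty
    exact ⟨x, Set.mem_biUnion w.2 x.2⟩
  refine ⟨fun ⟨x, hx⟩ ⟨y, hy⟩ => ?_⟩
  obtain ⟨w, hw, hxw⟩ := Set.mem_iUnion₂.1 hx
  obtain ⟨w', hw', hyw'⟩ := Set.mem_iUnion₂.1 hy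
  exact hφ.reachable_biUnion (hS.preconnected ⟨w, hw⟩ ⟨w', hw'⟩) hxw hyw'

theorem trans {ψ : U → Set W} (hψ : IsMinorModel F H ψ) (hφ : IsMinorModel H G φ) :
    IsMinorModel F G fun u => ⋃ w ∈ ψ u, φ w where
  connected u := hφ.connected_biUnion (hψ.connected u)
  disjoint u u' huu' := by
    simp only [Set.disjoint_iUnion_left, Set.disjoint_iUnion_right]
    exact fun w hw w' hw' => hφ.disjoint ((hψ.disjoint huu').ne_of_mem hw' hw)
  adj u u' huu' := by
    obtain ⟨w, hw, w', hw', hadj⟩ := hψ.adj huu'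
    obtain ⟨x, hx, y, hy, hxy⟩ := hφ.adj hadj
    exact ⟨x, Set.mem_biUnion hw hx, y, Set.mem_biUnion hw' hy, hxy⟩

theorem comp_copy (hφ : IsMinorModel H G φ) (g : Copy F H) : IsMinorModel F G (φ ∘ g) where
  connected u := hφ.connected (g u)
  disjoint _ _ huu' := hφ.disjoint (g.injective.ne huu')
  adj _ _ huu' := hφ.adj (g.toHom.map_adj huu')

theorem singleton (G : SimpleGraph V) : IsMinorModel G G fun v => {v} where
  connected := connected_induce_singleton G
  disjoint _ _ huv := Set.disjoint_singleton.2 huv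
  adj u v huv := ⟨u, rfl, v, rfl, huv⟩

theorem cons {n : ℕ} {f : Fin n → Set V} (hf : IsMinorModel (completeGraph (Fin n)) G f) {a : V}
    (ha : ∀ i, a ∉ f i) (hadj : ∀ i, ∃ x ∈ f i, G.Adj a x) :
    IsMinorModel (completeGraph (Fin (n + 1))) G (Fin.cons {a} f) where
  connected := Fin.cases (connected_induce_singleton G a) hf.connected
  disjoint := by
    intro i j hij
    cases i using Fin.cases with
    | zero =>
      cases j using Fin.cases with
      | zero => exact absurd rfl hij
      | succ j => exact Set.disjoint_singleton_left.2 (ha j)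
    | succ i =>
      cases j using Fin.cases with
      | zero => exact Set.disjoint_singleton_right.2 (ha i)
      | succ j => exact hf.disjoint fun h => hij (congrArg Fin.succ h)
  adj := by
    intro i j hij
    cases i using Fin.cases with
    | zero =>
      cases j using Fin.cases with
      | zero => exact absurd rfl hij
      | succ j => exact ⟨a, rfl, hadj j⟩
    | succ i =>
      cases j using Fin.cases with
      | zero =>
        obtain ⟨x, hx, hax⟩ := hadj i
        exact ⟨x, hx, a, rfl, hax.symm⟩
      | succ j => exact hf.adj fun h => hij (congrArg Fin.succ h)

theorem exists_not_adj [Finite W] (hφ : IsMinorModel H G φ) {t : ℕ}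
    (hG : ¬ IsMinor (completeGraph (Fin (t + 1))) G) {a : V} (ha : ∀ w, a ∉ φ w)
    {S : Set W} (hS : t ≤ S.ncard) (hadj : ∀ w ∈ S, ∃ x ∈ φ w, G.Adj a x) :
    ∃ w ∈ S, ∃ w' ∈ S, w ≠ w' ∧ ¬ H.Adj w w' := by
  by_contra! hclique
  obtain ⟨T, hTS, hTcard⟩ := Set.exists_subset_card_eq hS
  let e : Fin t ≃ T := (Finite.equivFinOfCardEq hTcard).symm
  let g : Copy (completeGraph (Fin t)) H :=
    ⟨⟨fun i => e i, fun {i j} hij => hclique _ (hTS (e i).2) _ (hTS (e j).2)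
      (Subtype.val_injective.ne (e.injective.ne hij))⟩, Subtype.val_injective.comp e.injective⟩
  exact hG ⟨_, (hφ.comp_copy g).cons (fun i => ha (g i)) fun i => hadj _ (hTS (e i).2)⟩

theorem update_insert [DecidableEq W] (hφ : IsMinorModel H G φ) {a : V} (ha : ∀ w, a ∉ φ w)
    {w w' : W} (hw : ∃ x ∈ φ w, G.Adj a x) (hw' : ∃ x ∈ φ w', G.Adj a x) :
    IsMinorModel (H ⊔ edge w w') G (Function.update φ w (insert a (φ w))) := by
  have le_update z : φ z ⊆ Function.update φ w (insert a (φ w)) z := by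
    rcases eq_or_ne z w with rfl | hz
    · simp
    · simp [hz]
  have disjoint_insert {z : W} (hz : z ≠ w) : Disjoint (insert a (φ w)) (φ z) :=
    Set.disjoint_insert_left.2 ⟨ha z, hφ.disjoint hz.symm⟩
  refine ⟨fun z => ?_, fun z z' hzz' => ?_, fun z z' hzz' => ?_⟩
  · rcases eq_or_ne z w with rfl | hz
    · obtain ⟨x, hx, hax⟩ := hw
      rw [Function.update_self, Set.insert_eq]
      exact connected_induce_union (connected_induce_singleton G a).preconnected
        (hφ.connected z).preconnected rfl hx hax
    · rw [Function.update_of_ne hz]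
      exact hφ.connected z
  · rcases eq_or_ne z w with rfl | hz
    · rw [Function.update_self, Function.update_of_ne hzz'.symm]
      exact disjoint_insert hzz'.symm
    · rw [Function.update_of_ne hz]
      rcases eq_or_ne z' w with rfl | hz'
      · rw [Function.update_self]
        exact (disjoint_insert hz).symm
      · rw [Function.update_of_ne hz']
        exact hφ.disjoint hzz'
  · obtain ⟨x, hx, hax⟩ := hw'
    have a_mem : a ∈ Function.update φ w (insert a (φ w)) w := by simp
    rcases hzz' with hzz' | hzz'
    · obtain ⟨y, hy, y', hy', hadj⟩ := hφ.adj hzz'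
      exact ⟨y, le_update z hy, y', le_update z' hy', hadj⟩
    · obtain ⟨⟨rfl, rfl⟩ | ⟨rfl, rfl⟩, -⟩ := (edge_adj ..).1 hzz'
      · exact ⟨a, a_mem, x, le_update z' hx, hax⟩
      · exact ⟨x, le_update z hx, a, a_mem, hax.symm⟩

end IsMinorModel

namespace IsMinor

theorem trans (hFH : IsMinor F H) (hHG : IsMinor H G) : IsMinor F G :=
  let ⟨_, hψ⟩ := hFH
  let ⟨_, hφ⟩ := hHG
  ⟨_, hψ.trans hφ⟩

theorem of_isContained (h : H ⊑ G) : IsMinor H G :=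
  let ⟨g⟩ := h
  ⟨_, (IsMinorModel.singleton G).comp_copy g⟩

end IsMinor

theorem exists_rooted_isMinorModel {t : ℕ} (hG : ¬ IsMinor (completeGraph (Fin (t + 1))) G)
    (B : Set V) [Finite B] (A : Finset V)
    (hA : ∀ a ∈ A, a ∉ B ∧ G.neighborSet a ⊆ B ∧ t ≤ (G.neighborSet a).ncard) :
    ∃ (H : SimpleGraph B) (φ : B → Set V), IsMinorModel H G φ ∧
      (∀ b, ↑b ∈ φ b ∧ φ b ⊆ insert ↑b ↑A) ∧ H.edgeSet.ncard = A.card := by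
  classical
  have := Fintype.ofFinite B
  induction A using Finset.induction_on with
  | empty =>
    exact ⟨⊥, fun b => {↑b}, (IsMinorModel.singleton G).comp_copy
      (Copy.bot (Function.Embedding.subtype (· ∈ B))), by simp, by simp⟩
  | insert a A ha ih =>
    obtain ⟨haB, hNB, hNt⟩ := hA a (Finset.mem_insert_self a A)
    obtain ⟨H, φ, hφ, hroot, hcard⟩ := ih fun x hx => hA x (Finset.mem_insert_of_mem hx)
    have ha_branch b : a ∉ φ b := fun hab =>
      ((hroot b).2 hab).elim (fun h => haB (h ▸ b.2)) ha
    have hadj (b : B) (hb : G.Adj a b) : ∃ x ∈ φ b, G.Adj a x := ⟨b, (hroot b).1, hb⟩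
    obtain ⟨b, hb, b', hb', hne, hnadj⟩ := hφ.exists_not_adj hG ha_branch
      (S := Subtype.val ⁻¹' G.neighborSet a)
      (by rwa [Set.ncard_preimage_of_injective_subset_range Subtype.val_injective (by simpa)]) hadj
    refine ⟨H ⊔ edge b b', _, hφ.update_insert ha_branch (hadj b hb) (hadj b' hb'),
      fun z => ?_, ?_⟩
    · rcases eq_or_ne z b with rfl | hz
      · rw [Function.update_self, Finset.coe_insert, Set.insert_comm]
        exact ⟨.inr (hroot z).1, Set.insert_subset_insert (hroot z).2⟩
      · rw [Function.update_of_ne hz]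
        exact ⟨(hroot z).1, (hroot z).2.trans (Set.insert_subset_insert (by simp))⟩
    · rw [Finset.card_insert_of_notMem ha, ← hcard, ← coe_edgeFinset, ← coe_edgeFinset,
        Set.ncard_coe_finset, Set.ncard_coe_finset, card_edgeFinset_sup_edge _ hnadj hne]

theorem exists_isMinor_ncard_edgeSet_eq [Finite V] {t : ℕ}
    (hG : ¬ IsMinor (completeGraph (Fin (t + 1))) G) {B : Set V}
    (hB : ∀ v ∉ B, G.neighborSet v ⊆ B) (hdeg : ∀ v ∉ B, t ≤ (G.neighborSet v).ncard) :
    ∃ H : SimpleGraph B, IsMinor H G ∧ H.edgeSet.ncard = Bᶜ.ncard := by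
  obtain ⟨H, φ, hφ, -, hcard⟩ := exists_rooted_isMinorModel hG B Bᶜ.toFinite.toFinset
    fun a ha => have ha : a ∉ B := by simpa using ha
      ⟨ha, hB a ha, hdeg a ha⟩
  exact ⟨H, ⟨φ, hφ⟩, hcard.trans (Set.ncard_eq_toFinset_card _).symm⟩

theorem mul_ncard_add_mul_ncard_compl_le [Finite V] {B : Set V} {a b : ℕ}
    (ha : ∀ v ∈ B, a ≤ (G.neighborSet v).ncard) (hb : ∀ v ∉ B, b ≤ (G.neighborSet v).ncard) :
    a * B.ncard + b * Bᶜ.ncard ≤ 2 * G.edgeSet.ncard := by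
  classical
  have := Fintype.ofFinite V
  have hdeg v : (G.neighborSet v).ncard = G.degree v := by
    rw [← Nat.card_coe_set_eq, Nat.card_eq_fintype_card, card_neighborSet_eq_degree]
  simp only [hdeg] at ha hb
  calc a * B.ncard + b * Bᶜ.ncard
      = B.toFinset.card • a + B.toFinsetᶜ.card • b := by
        simp only [Set.ncard_eq_toFinset_card', Set.toFinset_compl, smul_eq_mul, mul_comm]
    _ ≤ ∑ v ∈ B.toFinset, G.degree v + ∑ v ∈ B.toFinsetᶜ, G.degree v :=
        add_le_add (Finset.card_nsmul_le_sum _ _ _ (by simpa using ha))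
          (Finset.card_nsmul_le_sum _ _ _ (by simpa using hb))
    _ = 2 * G.edgeSet.ncard := by
        rw [Finset.sum_add_sum_compl, sum_degrees_eq_twice_card_edges, ← coe_edgeFinset,
          Set.ncard_coe_finset]

/-- Every finite minor of `G` has at most `r` times as many edges as vertices. Up to isomorphism,
taking the minors in the universe of `V` loses nothing, as a finite graph lives in every
universe. -/
def MinorDensityLE (G : SimpleGraph V) (r : ℝ) : Prop :=
  ∀ (W : Type v) [Finite W] (H : SimpleGraph W),
    IsMinor H G → (H.edgeSet.ncard : ℝ) ≤ r * Nat.card W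

theorem MinorDensityLE.of_isMinor {W : Type v} {H : SimpleGraph W} {r : ℝ}
    (hG : MinorDensityLE G r) (hHG : IsMinor H G) : MinorDensityLE H r :=
  fun U _ F hFH => hG U F (hFH.trans hHG)

theorem minorDensityLE_of_not_isMinor {r : ℝ}
    (hF : ∀ (W : Type v) [Finite W] (H : SimpleGraph W),
      ¬ IsMinor F H → (H.edgeSet.ncard : ℝ) ≤ r * Nat.card W)
    (hG : ¬ IsMinor F G) : MinorDensityLE G r :=
  fun W _ H hHG => hF W H fun hFH => hG (hFH.trans hHG)

theorem exists_ncard_neighborSet_lt [Finite V] [Nonempty V] {t k : ℕ} {r : ℝ} (hr : t / 2 ≤ r)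
    (hk : r * (2 * r - t + 2) < k + 1) (hG : ¬ IsMinor (completeGraph (Fin (t + 1))) G)
    (hdens : MinorDensityLE G r)
    (hlow : ∀ u v, G.Adj u v → k < (G.neighborSet u).ncard ∨ k < (G.neighborSet v).ncard) :
    ∃ v, (G.neighborSet v).ncard < t := by
  by_contra! hdeg
  set B : Set V := {v | k < (G.neighborSet v).ncard}
  obtain ⟨H, hHG, hHcard⟩ := exists_isMinor_ncard_edgeSet_eq hG (B := B)
    (fun v hv u hvu => (hlow v u hvu).resolve_left hv) fun v _ => hdeg v
  have compl_le : (Bᶜ.ncard : ℝ) ≤ r * B.ncard := by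
    simpa [hHcard] using hdens B H hHG
  have edges_le : (G.edgeSet.ncard : ℝ) ≤ r * (B.ncard + Bᶜ.ncard) := by
    simpa [← Set.ncard_add_ncard_compl B] using hdens V G (.of_isContained .rfl)
  have degree_sum : ((k + 1) * B.ncard + t * Bᶜ.ncard : ℝ) ≤ 2 * G.edgeSet.ncard := by
    exact_mod_cast mul_ncard_add_mul_ncard_compl_le (a := k + 1) (fun _ hv => hv) fun v _ => hdeg v
  have B_pos : 0 < B.ncard := by
    rw [Set.ncard_pos]
    by_contra! hB
    have : (Nat.card V : ℝ) ≤ 0 := by simpa [hB] using compl_le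
    exact Nat.card_pos.not_ge (by exact_mod_cast this)
  have : (k + 1) * (B.ncard : ℝ) < (k + 1) * B.ncard := calc
    (k + 1) * (B.ncard : ℝ) ≤ 2 * r * B.ncard + (2 * r - t) * Bᶜ.ncard := by linarith
    _ ≤ 2 * r * B.ncard + (2 * r - t) * (r * B.ncard) := by gcongr; linarith
    _ = r * (2 * r - t + 2) * B.ncard := by ring
    _ < (k + 1) * B.ncard := by gcongr
  exact this.false

/-- `c` is a colouring of defect `k`: each vertex has at most `k` neighbours of its own colour.
Intended for locally finite graphs, as `Set.ncard` is zero on infinite sets. -/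
def IsDefectiveColouring {ι : Type*} (G : SimpleGraph V) (c : V → ι) (k : ℕ) : Prop :=
  ∀ v, {u | c u = c v ∧ G.Adj v u}.ncard ≤ k

/-- The spanning subgraph of `G` obtained by deleting the edges whose ends both have degree at
most `k`. -/
def deleteLowEdges (G : SimpleGraph V) (k : ℕ) : SimpleGraph V :=
  G.deleteEdges {e | ∀ v ∈ e, (G.neighborSet v).ncard ≤ k}

theorem deleteLowEdges_le (G : SimpleGraph V) (k : ℕ) : deleteLowEdges G k ≤ G :=
  deleteEdges_le _

theorem deleteLowEdges_adj {k : ℕ} {u v : V} : (deleteLowEdges G k).Adj u v ↔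
    G.Adj u v ∧ (k < (G.neighborSet u).ncard ∨ k < (G.neighborSet v).ncard) := by
  simp only [deleteLowEdges, deleteEdges_adj, Set.mem_ofPred_eq, Sym2.ball, not_and_or, not_le]

theorem neighborSet_deleteLowEdges {k : ℕ} {v : V} (hv : k < (G.neighborSet v).ncard) :
    (deleteLowEdges G k).neighborSet v = G.neighborSet v := by
  ext u
  simp [deleteLowEdges_adj, hv]

theorem lt_ncard_neighborSet_of_deleteLowEdges_adj {k : ℕ} {u v : V}
    (h : (deleteLowEdges G k).Adj u v) :
    k < ((deleteLowEdges G k).neighborSet u).ncard ∨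
      k < ((deleteLowEdges G k).neighborSet v).ncard :=
  (deleteLowEdges_adj.1 h).2.imp (fun h => by rwa [neighborSet_deleteLowEdges h])
    fun h => by rwa [neighborSet_deleteLowEdges h]

namespace IsDefectiveColouring

variable {ι : Type*} {k : ℕ}

theorem of_deleteLowEdges [Finite V] {c : V → ι}
    (hc : IsDefectiveColouring (deleteLowEdges G k) c k) : IsDefectiveColouring G c k := by
  intro v
  rcases le_or_gt (G.neighborSet v).ncard k with hv | hv
  · exact (Set.ncard_le_ncard fun u hu => hu.2).trans hv
  · simpa [deleteLowEdges_adj, hv] using hc v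

theorem exists_extend [Finite V] {v : V} (hv : (G.neighborSet v).ncard < Nat.card ι)
    {c : ({v}ᶜ : Set V) → ι} (hc : IsDefectiveColouring (G.induce {v}ᶜ) c k) :
    ∃ c' : V → ι, IsDefectiveColouring G c' k := by
  obtain ⟨i, hi⟩ : ∃ i, ∀ u : ({v}ᶜ : Set V), G.Adj v u → c u ≠ i := by
    by_contra! hsurj
    refine hv.not_ge (Nat.card_le_card_of_surjective
      (fun u : G.neighborSet v => c ⟨u, u.2.ne'⟩) fun i => ?_)
    obtain ⟨u, hvu, hui⟩ := hsurj i
    exact ⟨⟨u, hvu⟩, hui⟩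
  set c' : V → ι := Function.extend Subtype.val c fun _ => i
  have c'_self : c' v = i := Function.extend_apply' _ _ _ (by simp)
  have c'_of_ne (u : ({v}ᶜ : Set V)) : c' u = c u := Subtype.val_injective.extend_apply ..
  have c'_ne {u : V} (hvu : G.Adj v u) : c' u ≠ i :=
    c'_of_ne ⟨u, hvu.ne'⟩ ▸ hi ⟨u, hvu.ne'⟩ hvu
  refine ⟨c', fun u => ?_⟩
  rcases eq_or_ne u v with rfl | hu
  · have : {w | c' w = c' u ∧ G.Adj u w} = ∅ :=
      Set.eq_empty_of_forall_notMem fun w hw => c'_ne hw.2 (hw.1.trans c'_self)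
    simp [this]
  · calc {w | c' w = c' u ∧ G.Adj u w}.ncard
        ≤ (Subtype.val '' {w | c w = c ⟨u, hu⟩ ∧ (G.induce {v}ᶜ).Adj ⟨u, hu⟩ w}).ncard := by
          refine Set.ncard_le_ncard fun w ⟨hcw, huw⟩ => ?_
          have hw : w ≠ v := by
            rintro rfl
            exact c'_ne huw.symm (hcw.symm.trans c'_self)
          exact ⟨⟨w, hw⟩, ⟨by rwa [← c'_of_ne, ← c'_of_ne], huw⟩, rfl⟩
      _ = _ := Set.ncard_image_of_injective _ Subtype.val_injective
      _ ≤ k := hc ⟨u, hu⟩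

end IsDefectiveColouring

theorem exists_isDefectiveColouring [Finite V] {t k : ℕ} {r : ℝ} (hr : t / 2 ≤ r)
    (hk : r * (2 * r - t + 2) < k + 1) (hG : ¬ IsMinor (completeGraph (Fin (t + 1))) G)
    (hdens : MinorDensityLE G r) : ∃ c : V → Fin t, IsDefectiveColouring G c k := by
  induction hn : Nat.card V generalizing V with
  | zero =>
    have := Finite.card_eq_zero_iff.1 hn
    exact ⟨isEmptyElim, isEmptyElim⟩
  | succ n ih =>
    have : Nonempty V := (Nat.card_pos_iff.1 (hn ▸ n.succ_pos)).1
    have hlow : IsMinor (deleteLowEdges G k) G := .of_isContained (.of_le (deleteLowEdges_le G k))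
    obtain ⟨v, hv⟩ := exists_ncard_neighborSet_lt hr hk (hG <| ·.trans hlow)
      (hdens.of_isMinor hlow) fun _ _ => lt_ncard_neighborSet_of_deleteLowEdges_adj
    have hdel : IsMinor ((deleteLowEdges G k).induce {v}ᶜ) G :=
      .trans (.of_isContained ⟨(Embedding.induce _).toCopy⟩) hlow
    obtain ⟨c, hc⟩ := ih (hG <| ·.trans hdel) (hdens.of_isMinor hdel) (by
      have := Set.ncard_add_ncard_compl ({v} : Set V)
      rw [Set.ncard_singleton] at this
      rw [Nat.card_coe_set_eq]
      omega)
    obtain ⟨c', hc'⟩ := hc.exists_extend (by simpa using hv)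
    exact ⟨c', hc'.of_deleteLowEdges⟩

theorem defective_colouring_general [Finite V] (t : ℕ) (r : ℝ) (hr : t / 2 ≤ r)
    (G : SimpleGraph V) (hdens : MinorDensityLE G r)
    (hG : ¬ IsMinor (completeGraph (Fin (t + 1))) G) :
    ∃ X : Fin t → Set V,
      (Pairwise fun i j => Disjoint (X i) (X j)) ∧
      (⋃ i, X i) = Set.univ ∧
      ∀ i, ∀ v ∈ X i, ({u | u ∈ X i ∧ G.Adj v u}.ncard : ℝ) ≤ r * (2 * r - t + 2) := by
  have hbound : 0 ≤ r * (2 * r - t + 2) := by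
    have : (0 : ℝ) ≤ t / 2 := by positivity
    exact mul_nonneg (by linarith) (by linarith)
  obtain ⟨c, hc⟩ := exists_isDefectiveColouring hr (Nat.lt_floor_add_one _) hG hdens
  refine ⟨fun i => c ⁻¹' {i}, fun i j hij => (Set.disjoint_singleton.2 hij).preimage c,
    by ext; simp, ?_⟩
  rintro i v rfl
  exact (Nat.cast_le.2 (hc v)).trans (Nat.floor_le hbound)

/-- Given `r > t/2` such that every finite graph with no `K_{t+1}` minor has at most
`r·|V|` edges, and `s` the least integer greater than `r(2r − t + 2)`, every finite
graph `G` with no `K_{t+1}` minor admits a partition of its vertex set into `t` sets,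
each inducing a subgraph of maximum degree strictly less than `s`. -/
theorem defective_colouring (t : ℕ) (r : ℝ) (hrt : r > t / 2)
    (hR : ∀ (W : Type) [Fintype W] (H : SimpleGraph W),
      ¬ HasCompleteMinor H (t + 1) → (Nat.card H.edgeSet : ℝ) ≤ r * Fintype.card W)
    (s : ℤ) (hs : r * (2 * r - t + 2) < s)
    (hsmin : ∀ m : ℤ, r * (2 * r - t + 2) < m → s ≤ m)
    (V : Type) [Fintype V] (G : SimpleGraph V)
    (hG : ¬ HasCompleteMinor G (t + 1)) :
    ∃ X : Fin t → Set V,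
      (Pairwise fun i j => Disjoint (X i) (X j)) ∧
      (⋃ i, X i) = Set.univ ∧
      ∀ i, ∀ v ∈ X i, (({u | u ∈ X i ∧ G.Adj v u}).ncard : ℤ) < s := by
  simp only [hasCompleteMinor_iff_isMinor, ← Nat.card_eq_fintype_card] at hR hG
  obtain ⟨X, hdisj, hcover, hX⟩ := defective_colouring_general t r hrt.le G
    (minorDensityLE_of_not_isMinor (fun W _ => @hR W (Fintype.ofFinite W)) hG) hG
  exact ⟨X, hdisj, hcover, fun i v hv => by exact_mod_cast (hX i v hv).trans_lt hs⟩
end
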